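/- Pointwise contraction inequality of the L-scheme (determinant form, Lemma 4.2 with μ_f = 0): let d ≥ 1, let U, V be symmetric d×d real matrices, and let 0 < λm ≤ λM and Λ > 0 be real numbers with λm•I ⪯ U ⪯ V ⪯ λM•I and Λ ≥ λM^(d−1). Set ξ := max(det(U)/λM, λm^(d−1)). Then 0 ≤ (1 − λM^(d−1)/Λ)·trace(V − U) ≤ trace(V − U) − (det(V) − det(U))/Λ ≤ (1 − ξ/Λ)·trace(V − U). -/

import Mathlib

/-!
The determinant lies above its tangent at `A` along every comparable pair of positive semidefinite
matrices: `det A + tr (adj A (B - A)) ≤ det B` whenever `A ≤ B` or `B ≤ A`. Normalising `A` to the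
identity by a congruence, this is the Bernoulli inequality `1 + ∑ (νᵢ - 1) ≤ ∏ νᵢ` for the
eigenvalues of the transformed `B`, which lie all above or all below `1`. The tangents at `U` and
at `V` therefore squeeze `det V - det U` between `tr (adj U (V - U))` and `tr (adj V (V - U))`.
Finally, the eigenvalues of an adjugate are the products of all but one of the original eigenvalues,
so `ξ I ≤ adj U` and `adj V ≤ λ_M ^ (d - 1) I`.
-/

theorem one_add_sum_sub_one_le_prod {ι R : Type*} [CommRing R] [PartialOrder R] [IsOrderedRing R]
    {s : Finset ι} {f : ι → R} (hf : ∀ i ∈ s, 0 ≤ f i)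
    (h : (∀ i ∈ s, 1 ≤ f i) ∨ ∀ i ∈ s, f i ≤ 1) :
    1 + ∑ i ∈ s, (f i - 1) ≤ ∏ i ∈ s, f i := by
  classical
  induction s using Finset.induction_on with
  | empty => simp
  | insert a s ha ih =>
    rw [Finset.forall_mem_insert] at hf
    simp only [Finset.forall_mem_insert] at h
    have ih := ih hf.2 (h.imp And.right And.right)
    have hcross : 0 ≤ (f a - 1) * (∏ i ∈ s, f i - 1) := by
      rcases h with h | h
      · exact mul_nonneg (sub_nonneg.2 h.1) (sub_nonneg.2 (Finset.one_le_prod h.2))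
      · exact mul_nonneg_of_nonpos_of_nonpos (sub_nonpos.2 h.1)
          (sub_nonpos.2 (Finset.prod_le_one hf.2 h.2))
    rw [Finset.sum_insert ha, Finset.prod_insert ha]
    calc 1 + (f a - 1 + ∑ i ∈ s, (f i - 1)) = (f a - 1) + (1 + ∑ i ∈ s, (f i - 1)) := by ring
      _ ≤ (f a - 1) + ∏ i ∈ s, f i := by gcongr
      _ ≤ (f a - 1) + ∏ i ∈ s, f i + (f a - 1) * (∏ i ∈ s, f i - 1) :=
        le_add_of_nonneg_right hcross
      _ = f a * ∏ i ∈ s, f i := by ring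

section Adjugate

open Matrix

variable {n R : Type*} [Fintype n] [DecidableEq n] [CommRing R]

theorem adjugate_conj_of_mul_eq_one {P Q : Matrix n n R} (h : P * Q = 1) (M : Matrix n n R) :
    (P * M * Q).adjugate = P * M.adjugate * Q := by
  have hQP : Q * P = 1 := mul_eq_one_comm.1 h
  have hP : P.adjugate = P.det • Q := by
    rw [← mul_one P.adjugate, ← h, ← mul_assoc, adjugate_mul, smul_one_mul]
  have hQ : Q.adjugate = Q.det • P := by
    rw [← mul_one Q.adjugate, ← hQP, ← mul_assoc, adjugate_mul, smul_one_mul]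
  have hdet : Q.det * P.det = 1 := by rw [← det_mul, hQP, det_one]
  rw [adjugate_mul_distrib, adjugate_mul_distrib, hP, hQ, mul_smul_comm, mul_smul_comm,
    smul_mul_assoc, smul_smul, mul_comm P.det, hdet, one_smul, mul_assoc]

theorem trace_adjugate_mul_mul_sub_mul (P Q N : Matrix n n R) :
    ((P * Q).adjugate * (P * N * Q - P * Q)).trace = (P * Q).det * (N - 1).trace := by
  calc ((P * Q).adjugate * (P * N * Q - P * Q)).trace
      = (Q.adjugate * (P.adjugate * P) * (N - 1) * Q).trace := by
        rw [adjugate_mul_distrib]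
        congr 1
        noncomm_ring
    _ = P.det * ((Q * Q.adjugate) * (N - 1)).trace := by
        rw [adjugate_mul, trace_mul_comm]
        simp [mul_assoc]
    _ = (P * Q).det * (N - 1).trace := by
        rw [mul_adjugate, det_mul, smul_mul_assoc, one_mul, trace_smul, smul_eq_mul, mul_assoc]

end Adjugate

section LoewnerOrder

open Matrix Finset
open scoped MatrixOrder ComplexOrder Topology

variable {n 𝕜 : Type*} [Fintype n] [RCLike 𝕜] {A B : Matrix n n 𝕜}

theorem trace_mul_le_trace_mul_of_le {H : Matrix n n 𝕜} (hAB : A ≤ B) (hH : 0 ≤ H) :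
    (A * H).trace ≤ (B * H).trace := by
  classical
  obtain ⟨C, rfl⟩ := CStarAlgebra.nonneg_iff_eq_star_mul_self.1 hH
  have h := (le_iff.1 (star_right_conjugate_le_conjugate hAB C)).trace_nonneg
  rw [trace_sub, sub_nonneg] at h
  simpa only [← mul_assoc, trace_mul_comm _ C] using h

variable [DecidableEq n]

theorem le_eigenvalues_of_smul_one_le (hA : A.IsHermitian) {c : ℝ} (h : c • 1 ≤ A) (i : n) :
    c ≤ hA.eigenvalues i :=
  (algebraMap_le_iff_le_spectrum hA.isSelfAdjoint).1 (by rwa [Algebra.algebraMap_eq_smul_one]) _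
    (hA.eigenvalues_mem_spectrum_real i)

theorem eigenvalues_le_of_le_smul_one (hA : A.IsHermitian) {c : ℝ} (h : A ≤ c • 1) (i : n) :
    hA.eigenvalues i ≤ c :=
  (le_algebraMap_iff_spectrum_le hA.isSelfAdjoint).1 (by rwa [Algebra.algebraMap_eq_smul_one]) _
    (hA.eigenvalues_mem_spectrum_real i)

theorem one_add_trace_sub_one_le_det {N : Matrix n n 𝕜} (hN : 0 ≤ N) (h : 1 ≤ N ∨ N ≤ 1) :
    1 + (N - 1).trace ≤ N.det := by
  have hH := hN.posSemidef.isHermitian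
  have heig : (∀ i ∈ univ, 1 ≤ hH.eigenvalues i) ∨ ∀ i ∈ univ, hH.eigenvalues i ≤ 1 :=
    h.imp (fun h i _ => le_eigenvalues_of_smul_one_le hH (by rwa [one_smul]) i)
      (fun h i _ => eigenvalues_le_of_le_smul_one hH (by rwa [one_smul]) i)
  have hprod := one_add_sum_sub_one_le_prod (fun i _ => hN.posSemidef.eigenvalues_nonneg i) heig
  have htrace : (N - 1).trace = ∑ i, ((hH.eigenvalues i : 𝕜) - 1) := by
    rw [trace_sub, hH.trace_eq_sum_eigenvalues, trace_one, sum_sub_distrib]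
    simp
  rw [htrace, hH.det_eq_prod_eigenvalues]
  exact_mod_cast hprod

theorem det_add_trace_adjugate_mul_sub_le_of_posDef (hA : A.PosDef) (hB : 0 ≤ B)
    (hAB : A ≤ B ∨ B ≤ A) : A.det + (A.adjugate * (B - A)).trace ≤ B.det := by
  obtain ⟨C, hC, hAC⟩ :=
    CStarAlgebra.isStrictlyPositive_iff_eq_star_mul_self.1 hA.isStrictlyPositive
  obtain ⟨D, hCD, hDC⟩ := isUnit_iff_exists.1 hC
  have hAD : star D * A * D = 1 := by
    rw [hAC, ← mul_assoc, ← star_mul, mul_assoc, hCD, star_one, mul_one]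
  obtain ⟨N, hND⟩ : ∃ N, N = star D * B * D := ⟨_, rfl⟩
  have hBN : star C * N * C = B := by
    calc star C * N * C = star (D * C) * B * (D * C) := by simp only [hND, star_mul, mul_assoc]
      _ = B := by rw [hDC, star_one, one_mul, mul_one]
  have hN : 0 ≤ N := hND ▸ star_left_conjugate_nonneg hB D
  have hN1 : 1 ≤ N ∨ N ≤ 1 := by
    rw [hND, ← hAD]
    exact hAB.imp (star_left_conjugate_le_conjugate · D) (star_left_conjugate_le_conjugate · D)
  have hBdet : B.det = A.det * N.det := by
    rw [← hBN, hAC, det_mul, det_mul, det_mul, mul_right_comm]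
  calc A.det + (A.adjugate * (B - A)).trace = A.det * (1 + (N - 1).trace) := by
        rw [← hBN, hAC, trace_adjugate_mul_mul_sub_mul, mul_one_add]
    _ ≤ A.det * N.det :=
        mul_le_mul_of_nonneg_left (one_add_trace_sub_one_le_det hN hN1) hA.det_pos.le
    _ = B.det := hBdet.symm

theorem det_add_trace_adjugate_mul_sub_le (hA : 0 ≤ A) (hB : 0 ≤ B) (hAB : A ≤ B ∨ B ≤ A) :
    A.det + (A.adjugate * (B - A)).trace ≤ B.det := by
  have hshift (ε : ℝ) (hε : 0 < ε) :
      (A + ε • 1).det + ((A + ε • 1).adjugate * (B - A)).trace ≤ (B + ε • 1).det := by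
    have hone : (ε • (1 : Matrix n n 𝕜)).PosDef := PosDef.one.smul hε
    have h := det_add_trace_adjugate_mul_sub_le_of_posDef (PosDef.posSemidef_add hA.posSemidef hone)
      (add_nonneg hB hone.posSemidef.nonneg)
      (hAB.imp (add_le_add_left · _) (add_le_add_left · _))
    rwa [add_sub_add_right_eq_sub] at h
  have hlim {f : Matrix n n 𝕜 → 𝕜} (hf : Continuous f) (M : Matrix n n 𝕜) :
      Filter.Tendsto (fun ε : ℝ => f (M + ε • 1)) (𝓝[>] 0) (𝓝 (f M)) := by
    have hcont : Continuous fun ε : ℝ => f (M + ε • 1) := by fun_prop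
    simpa using (hcont.tendsto 0).mono_left nhdsWithin_le_nhds
  have hleft : Continuous fun M : Matrix n n 𝕜 => M.det + (M.adjugate * (B - A)).trace := by
    fun_prop
  exact le_of_tendsto_of_tendsto (hlim hleft A) (hlim continuous_id.matrix_det B)
    (eventually_mem_nhdsWithin.mono hshift)

theorem spectrum_real_adjugate_eq_range (hA : A.IsHermitian) :
    spectrum ℝ A.adjugate = Set.range fun i => ∏ j ∈ univ.erase i, hA.eigenvalues j := by
  have hadj : A.adjugate = Unitary.conjStarAlgAut 𝕜 _ hA.eigenvectorUnitary
      (diagonal fun i => ((∏ j ∈ univ.erase i, hA.eigenvalues j : ℝ) : 𝕜)) := by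
    conv_lhs => rw [hA.spectral_theorem]
    rw [Unitary.conjStarAlgAut_apply, Unitary.conjStarAlgAut_apply,
      
      adjugate_conj_of_mul_eq_one (Unitary.mul_star_self_of_mem hA.eigenvectorUnitary.2),
      adjugate_diagonal]
    simp only [Function.comp_apply, RCLike.ofReal_prod]
  ext x
  rw [hadj, ← spectrum.algebraMap_mem_iff 𝕜]
  simp [-Unitary.conjStarAlgAut_apply, -map_prod]

theorem smul_one_le_adjugate_iff (hA : A.IsHermitian) {c : ℝ} :
    c • 1 ≤ A.adjugate ↔ ∀ i, c ≤ ∏ j ∈ univ.erase i, hA.eigenvalues j := by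
  rw [← Algebra.algebraMap_eq_smul_one, algebraMap_le_iff_le_spectrum hA.adjugate.isSelfAdjoint,
    spectrum_real_adjugate_eq_range hA, Set.forall_mem_range]

theorem adjugate_le_smul_one_iff (hA : A.IsHermitian) {c : ℝ} :
    A.adjugate ≤ c • 1 ↔ ∀ i, ∏ j ∈ univ.erase i, hA.eigenvalues j ≤ c := by
  rw [← Algebra.algebraMap_eq_smul_one, le_algebraMap_iff_spectrum_le hA.adjugate.isSelfAdjoint,
    spectrum_real_adjugate_eq_range hA, Set.forall_mem_range]

theorem pow_smul_one_le_adjugate {c : ℝ} (hc : 0 ≤ c) (hA : A.IsHermitian) (h : c • 1 ≤ A) :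
    c ^ (Fintype.card n - 1) • 1 ≤ A.adjugate := by
  refine (smul_one_le_adjugate_iff hA).2 fun i => ?_
  rw [← card_univ, ← card_erase_of_mem (mem_univ i), ← prod_const]
  exact prod_le_prod (fun _ _ => hc) fun j _ => le_eigenvalues_of_smul_one_le hA h j

theorem adjugate_le_pow_smul_one {c : ℝ} (hA : 0 ≤ A) (h : A ≤ c • 1) :
    A.adjugate ≤ c ^ (Fintype.card n - 1) • 1 := by
  have hH := hA.posSemidef.isHermitian
  refine (adjugate_le_smul_one_iff hH).2 fun i => ?_
  rw [← card_univ, ← card_erase_of_mem (mem_univ i), ← prod_const]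
  exact prod_le_prod (fun j _ => hA.posSemidef.eigenvalues_nonneg j)
    fun j _ => eigenvalues_le_of_le_smul_one hH h j

theorem det_div_smul_one_le_adjugate {c : ℝ} (hc : 0 < c) (hA : 0 ≤ A) (h : A ≤ c • 1) :
    (RCLike.re A.det / c) • 1 ≤ A.adjugate := by
  have hH := hA.posSemidef.isHermitian
  have hdet : RCLike.re A.det = ∏ j, hH.eigenvalues j := by
    rw [hH.det_eq_prod_eigenvalues, ← RCLike.ofReal_prod, RCLike.ofReal_re]
  refine (smul_one_le_adjugate_iff hH).2 fun i => ?_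
  rw [hdet, div_le_iff₀' hc, ← mul_prod_erase univ _ (mem_univ i)]
  exact mul_le_mul_of_nonneg_right (eigenvalues_le_of_le_smul_one hH h i)
    (prod_nonneg fun j _ => hA.posSemidef.eigenvalues_nonneg j)

theorem smul_trace_sub_le_det_sub_det {c : ℝ} (hA : 0 ≤ A) (hAB : A ≤ B)
    (hc : c • 1 ≤ A.adjugate) : c • (B - A).trace ≤ B.det - A.det := by
  calc c • (B - A).trace = (c • 1 * (B - A)).trace := by rw [smul_one_mul, trace_smul]
    _ ≤ (A.adjugate * (B - A)).trace := trace_mul_le_trace_mul_of_le hc (sub_nonneg.2 hAB)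
    _ ≤ B.det - A.det :=
      le_sub_iff_add_le'.2 (det_add_trace_adjugate_mul_sub_le hA (hA.trans hAB) (.inl hAB))

theorem det_sub_det_le_smul_trace_sub {c : ℝ} (hA : 0 ≤ A) (hAB : A ≤ B)
    (hc : B.adjugate ≤ c • 1) : B.det - A.det ≤ c • (B - A).trace := by
  have htangent := det_add_trace_adjugate_mul_sub_le (hA.trans hAB) hA (.inr hAB)
  calc B.det - A.det ≤ (B.adjugate * (B - A)).trace := by
        rw [← neg_sub B A, mul_neg, trace_neg, ← sub_eq_add_neg] at htangent
        exact sub_le_comm.1 htangent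
    _ ≤ (c • 1 * (B - A)).trace := trace_mul_le_trace_mul_of_le hc (sub_nonneg.2 hAB)
    _ = c • (B - A).trace := by rw [smul_one_mul, trace_smul]

theorem lscheme_core_inequality_det_general {U V : Matrix n n 𝕜} {lm lM L : ℝ} (hlm : 0 ≤ lm)
    (hlM : 0 < lM) (hUlm : lm • 1 ≤ U) (hUV : U ≤ V) (hVlM : V ≤ lM • 1)
    (hLge : lM ^ (Fintype.card n - 1) ≤ L) :
    0 ≤ (1 - lM ^ (Fintype.card n - 1) / L) * RCLike.re (V - U).trace ∧
    (1 - lM ^ (Fintype.card n - 1) / L) * RCLike.re (V - U).trace ≤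
      RCLike.re (V - U).trace - (RCLike.re V.det - RCLike.re U.det) / L ∧
    RCLike.re (V - U).trace - (RCLike.re V.det - RCLike.re U.det) / L ≤
      (1 - max (RCLike.re U.det / lM) (lm ^ (Fintype.card n - 1)) / L) *
        RCLike.re (V - U).trace := by
  have hL : 0 < L := (pow_pos hlM _).trans_le hLge
  have hU : 0 ≤ U := (smul_nonneg hlm zero_le_one).trans hUlm
  have htrace : 0 ≤ RCLike.re (V - U).trace :=
    (RCLike.nonneg_iff.1 (le_iff.1 hUV).trace_nonneg).1
  have hξ : max (RCLike.re U.det / lM) (lm ^ (Fintype.card n - 1)) • 1 ≤ U.adjugate :=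
    max_rec' (fun ξ : ℝ => ξ • 1 ≤ U.adjugate)
      (det_div_smul_one_le_adjugate hlM hU (hUV.trans hVlM))
      (pow_smul_one_le_adjugate hlm hU.posSemidef.isHermitian hUlm)
  have hlower := RCLike.re_le_re (smul_trace_sub_le_det_sub_det hU hUV hξ)
  have hupper := RCLike.re_le_re (det_sub_det_le_smul_trace_sub hU hUV
    (adjugate_le_pow_smul_one (hU.trans hUV) hVlM))
  rw [RCLike.smul_re, map_sub RCLike.re V.det] at hlower hupper
  refine ⟨mul_nonneg (sub_nonneg.2 (div_le_one_of_le₀ hLge hL.le)) htrace, ?_, ?_⟩ <;>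
    rw [one_sub_mul, div_mul_eq_mul_div] <;> gcongr

end LoewnerOrder

/-- Pointwise contraction inequality of the L-scheme (determinant form). -/
theorem lscheme_core_inequality_det (d : ℕ) (hd : 1 ≤ d)
    (U V : Matrix (Fin d) (Fin d) ℝ)
    (hU : U.IsHermitian) (hV : V.IsHermitian)
    (lm lM L : ℝ) (hlm : 0 < lm) (hlmM : lm ≤ lM) (hL : 0 < L)
    (hUlm : (U - lm • (1 : Matrix (Fin d) (Fin d) ℝ)).PosSemidef)
    (hVU : (V - U).PosSemidef)
    (hVlM : (lM • (1 : Matrix (Fin d) (Fin d) ℝ) - V).PosSemidef)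
    (hLge : lM ^ (d - 1) ≤ L) :
    0 ≤ (1 - lM ^ (d - 1) / L) * (V - U).trace ∧
    (1 - lM ^ (d - 1) / L) * (V - U).trace ≤
      (V - U).trace - (V.det - U.det) / L ∧
    (V - U).trace - (V.det - U.det) / L ≤
      (1 - max (U.det / lM) (lm ^ (d - 1)) / L) * (V - U).trace := by
  simpa using lscheme_core_inequality_det_general hlm.le (hlm.trans_le hlmM) hUlm hVU hVlM
    (by rwa [Fintype.card_fin])
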